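/- On ℝ³ with coordinates (u,v,x) (restricted to v > 0, x > 0), consider the Brinkmann metric g = dv(2du + F(u,v,x)dv) + dx² with F(u,v,x) = ((4uv − x²)log(vx) + x²)/(2v²). Then: (i) the Ricci operator satisfies Ric(∂_u) = 0, Ric(∂_v) = ((4uv + 2x²log(vx) + x²)/(4v²x²))∂_u + (1/(vx))∂_x, Ric(∂_x) = (1/(vx))∂_u, and is 3-step nilpotent; (ii) the function h(u,v,x) = vx satisfies the vacuum weighted Einstein field equation h·ρ − Hes_h + (Δh)g = 0 (i.e. with Λ = 0); (iii) ∇h = x∂_u + v∂_x, so ‖∇h‖² = v² and ∇h is spacelike. In particular there exist non-isotropic 3-dimensional Brinkmann wave solutions that are not pp-waves. -/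

import Mathlib

noncomputable section
open Matrix

/-- Points of the coordinate space `ℝⁿ`. -/
abbrev Pt (n : ℕ) := Fin n → ℝ

/-- Partial derivative `∂_i f` in the `i`-th coordinate direction. -/
def pd {n : ℕ} (i : Fin n) (f : Pt n → ℝ) (p : Pt n) : ℝ :=
  fderiv ℝ f p (Pi.single i 1)

/-- The inverse metric `g^{ij}` of a metric `g` given as a matrix of components. -/
def ginv {n : ℕ} (g : Pt n → Fin n → Fin n → ℝ) (p : Pt n) : Matrix (Fin n) (Fin n) ℝ :=
  (Matrix.of (g p))⁻¹

/-- Christoffel symbols `Γ^k_{ij}` of the Levi-Civita connection of `g`. -/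
def chr {n : ℕ} (g : Pt n → Fin n → Fin n → ℝ) (k i j : Fin n) (p : Pt n) : ℝ :=
  (1/2) * ∑ l, ginv g p k l *
    (pd i (fun q => g q l j) p + pd j (fun q => g q l i) p - pd l (fun q => g q i j) p)

/-- Components `R_{ij}` of the Ricci tensor of `g`. -/
def RicciT {n : ℕ} (g : Pt n → Fin n → Fin n → ℝ) (i j : Fin n) (p : Pt n) : ℝ :=
  (∑ k, pd k (fun q => chr g k i j q) p) - (∑ k, pd j (fun q => chr g k i k q) p)
  + (∑ k, ∑ l, chr g k k l p * chr g l i j p) - (∑ k, ∑ l, chr g k j l p * chr g l i k p)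

/-- Scalar curvature `τ = g^{ij} R_{ij}` of `g`. -/
def Scal {n : ℕ} (g : Pt n → Fin n → Fin n → ℝ) (p : Pt n) : ℝ :=
  ∑ i, ∑ j, ginv g p i j * RicciT g i j p

/-- Components of the Hessian `Hes_f` of a function `f` with respect to `g`. -/
def Hess {n : ℕ} (g : Pt n → Fin n → Fin n → ℝ) (f : Pt n → ℝ) (i j : Fin n) (p : Pt n) : ℝ :=
  pd i (fun q => pd j f q) p - ∑ k, chr g k i j p * pd k f p

/-- Laplacian `Δf = g^{ij}(Hes_f)_{ij}`. -/
def Lap {n : ℕ} (g : Pt n → Fin n → Fin n → ℝ) (f : Pt n → ℝ) (p : Pt n) : ℝ :=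
  ∑ i, ∑ j, ginv g p i j * Hess g f i j p

/-- Components of the gradient `∇f = g^{ij} ∂_j f ∂_i`. -/
def gradV {n : ℕ} (g : Pt n → Fin n → Fin n → ℝ) (f : Pt n → ℝ) (p : Pt n) (i : Fin n) : ℝ :=
  ∑ j, ginv g p i j * pd j f p

/-- `‖∇f‖² = g(∇f,∇f) = g^{ij} ∂_i f ∂_j f`. -/
def gradNorm2 {n : ℕ} (g : Pt n → Fin n → Fin n → ℝ) (f : Pt n → ℝ) (p : Pt n) : ℝ :=
  ∑ i, ∑ j, ginv g p i j * pd i f p * pd j f p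

/-- The vacuum weighted Einstein field equation
`h·ρ − Hes_h + (Δh + Λ)g = 0` at the point `p`. -/
def WEFEat {n : ℕ} (g : Pt n → Fin n → Fin n → ℝ) (h : Pt n → ℝ) (Λ : ℝ) (p : Pt n) : Prop :=
  ∀ i j, h p * RicciT g i j p - Hess g h i j p + (Lap g h p + Λ) * g p i j = 0

/-- The Ricci operator `Ric = g^{-1}·ρ` as a matrix (column `j` lists the
components of `Ric ∂_j`). -/
def RicOpM {n : ℕ} (g : Pt n → Fin n → Fin n → ℝ) (p : Pt n) : Matrix (Fin n) (Fin n) ℝ :=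
  Matrix.of fun i j => ∑ k, ginv g p i k * RicciT g k j p

/-- The `k`-th component of the covariant derivative `∇_{∂_i} V`. -/
def covD {n : ℕ} (g : Pt n → Fin n → Fin n → ℝ) (V : Pt n → Fin n → ℝ) (i k : Fin n)
    (p : Pt n) : ℝ :=
  pd i (fun q => V q k) p + ∑ m, chr g k i m p * V p m

/-- Components `R^l_{ijk}` of the (1,3)-curvature tensor:
`R(∂_i,∂_j)∂_k = R^l_{ijk} ∂_l`. -/
def RiemUp {n : ℕ} (g : Pt n → Fin n → Fin n → ℝ) (l i j k : Fin n) (p : Pt n) : ℝ :=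
  pd i (fun q => chr g l j k q) p - pd j (fun q => chr g l i k q) p
  + (∑ m, chr g l i m p * chr g m j k p) - (∑ m, chr g l j m p * chr g m i k p)

/-- The (0,4)-curvature tensor `R(∂_i,∂_j,∂_k,∂_l) = g(R(∂_i,∂_j)∂_k, ∂_l)`. -/
def RiemLow {n : ℕ} (g : Pt n → Fin n → Fin n → ℝ) (i j k l : Fin n) (p : Pt n) : ℝ :=
  ∑ m, g p l m * RiemUp g m i j k p

/-- A symmetric matrix of Lorentzian signature `(−,+,+)`. -/
def IsLorentz3 (A : Matrix (Fin 3) (Fin 3) ℝ) : Prop :=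
  A.IsSymm ∧ ∃ P : Matrix (Fin 3) (Fin 3) ℝ, IsUnit P.det ∧
    Pᵀ * A * P = Matrix.diagonal ![(-1 : ℝ), 1, 1]

/-- Jacobian matrix of a coordinate change `ψ`. -/
def jac {n : ℕ} (ψ : Pt n → Pt n) (q : Pt n) : Matrix (Fin n) (Fin n) ℝ :=
  Matrix.of fun i j => pd j (fun r => ψ r i) q

/-- Pullback `ψ^*g` of the metric `g` under the coordinate change `ψ`. -/
def pullback {n : ℕ} (g : Pt n → Fin n → Fin n → ℝ) (ψ : Pt n → Pt n) (q : Pt n) :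
    Matrix (Fin n) (Fin n) ℝ :=
  (jac ψ q)ᵀ * Matrix.of (g (ψ q)) * jac ψ q

/-- The 3-dimensional plane-wave metric `dv(2du − (α''(v)/α(v))x² dv) + dx²`
in coordinates `(u,v,x) = (q 0, q 1, q 2)`. -/
def planeWaveM (α : ℝ → ℝ) (q : Pt 3) : Matrix (Fin 3) (Fin 3) ℝ :=
  Matrix.of fun i j =>
    if i = 0 ∧ j = 1 then 1 else if i = 1 ∧ j = 0 then 1
    else if i = 1 ∧ j = 1 then -(deriv (deriv α) (q 1) / α (q 1)) * (q 2)^2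
    else if i = 2 ∧ j = 2 then 1 else 0


/-- The 3-dimensional Brinkmann metric `dv(2du + F(u,v,x)dv) + dx²` in
coordinates `(u,v,x) = (p 0, p 1, p 2)`. -/
def brinkM (F : Pt 3 → ℝ) (p : Pt 3) : Fin 3 → Fin 3 → ℝ := fun i j =>
  if i = 0 ∧ j = 1 then 1 else if i = 1 ∧ j = 0 then 1
  else if i = 1 ∧ j = 1 then F p
  else if i = 2 ∧ j = 2 then 1 else 0

/-- The function `F(u,v,x) = ((4uv − x²)log(vx) + x²)/(2v²)` of
Example 4.2. -/
def exF18 (p : Pt 3) : ℝ :=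
  ((4 * p 0 * p 1 - (p 2)^2) * Real.log (p 1 * p 2) + (p 2)^2) / (2 * (p 1)^2)

set_option linter.unusedSimpArgs false

theorem ginv_brink (F : Pt 3 → ℝ) (p : Pt 3) :
    ginv (brinkM F) p = !![-F p, 1, 0; 1, 0, 0; 0, 0, 1] := by
  unfold ginv
  apply Matrix.inv_eq_right_inv
  ext i j
  fin_cases i <;> fin_cases j <;> simp [Matrix.mul_apply, Fin.sum_univ_three, brinkM]

theorem pd_const {n : ℕ} (i : Fin n) (c : ℝ) (p : Pt n) : pd i (fun _ => c) p = 0 := by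
  simp [pd]

theorem pd_neg' {n : ℕ} (i : Fin n) (f : Pt n → ℝ) (p : Pt n) :
    pd i (fun q => - f q) p = - pd i f p := by
  simp [pd]

theorem pd_upd {n : ℕ} (i : Fin n) (f : Pt n → ℝ) (p : Pt n) (d : ℝ)
    (hf : DifferentiableAt ℝ f p)
    (hd : HasDerivAt (fun t => f (Function.update p i t)) d (p i)) : pd i f p = d := by
  have h1 := hasDerivAt_update p i (p i)
  have h2 : HasFDerivAt f (fderiv ℝ f p) (Function.update p i (p i)) := by
    rw [Function.update_eq_self]; exact hf.hasFDerivAt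
  have h3 := h2.comp_hasDerivAt (p i) h1
  exact h3.unique hd

theorem pd_congr {n : ℕ} (i : Fin n) (f g : Pt n → ℝ) (p : Pt n)
    (h : f =ᶠ[nhds p] g) : pd i f p = pd i g p := by
  unfold pd; rw [h.fderiv_eq]

/-- Christoffel table for a general `F`. -/
def chrT (F : Pt 3 → ℝ) (k i j : Fin 3) (p : Pt 3) : ℝ :=
  ![![![0, pd 0 F p / 2, 0],
      ![pd 0 F p / 2, (F p * pd 0 F p + pd 1 F p) / 2, pd 2 F p / 2],
      ![0, pd 2 F p / 2, 0]],
    ![![0, 0, 0], ![0, -(pd 0 F p / 2), 0], ![0, 0, 0]],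
    ![![0, 0, 0], ![0, -(pd 2 F p / 2), 0], ![0, 0, 0]]] k i j

theorem chr_brink (F : Pt 3 → ℝ) (k i j : Fin 3) (p : Pt 3) :
    chr (brinkM F) k i j p = chrT F k i j p := by
  have e : (fun q => F q) = F := rfl
  unfold chr
  rw [ginv_brink]
  fin_cases k <;> fin_cases i <;> fin_cases j <;>
    simp [chrT, Fin.sum_univ_three, brinkM, pd_const, e] <;> ring

/-- The explicit first derivatives of `exF18`. -/
def F0 (p : Pt 3) : ℝ := 2 * Real.log (p 1 * p 2) / p 1
def F1 (p : Pt 3) : ℝ :=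
  (4 * p 0 * Real.log (p 1 * p 2) + (4 * p 0 * p 1 - (p 2)^2) / p 1) / (2 * (p 1)^2)
    - ((4 * p 0 * p 1 - (p 2)^2) * Real.log (p 1 * p 2) + (p 2)^2) / (p 1)^3
def F2 (p : Pt 3) : ℝ :=
  (4 * p 0 * p 1 / p 2 - 2 * p 2 * Real.log (p 1 * p 2) + p 2) / (2 * (p 1)^2)

theorem diff_F (p : Pt 3) (h1 : 0 < p 1) (h2 : 0 < p 2) : DifferentiableAt ℝ exF18 p := by
  have a : p 1 * p 2 ≠ 0 := by positivity
  have b : 2 * (p 1)^2 ≠ 0 := by positivity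
  unfold exF18
  fun_prop (disch := assumption)

theorem diff_F0 (p : Pt 3) (h1 : 0 < p 1) (h2 : 0 < p 2) : DifferentiableAt ℝ F0 p := by
  have a : p 1 * p 2 ≠ 0 := by positivity
  have b : p 1 ≠ 0 := by positivity
  unfold F0
  fun_prop (disch := assumption)

theorem diff_F1 (p : Pt 3) (h1 : 0 < p 1) (h2 : 0 < p 2) : DifferentiableAt ℝ F1 p := by
  have a : p 1 * p 2 ≠ 0 := by positivity
  have b : p 1 ≠ 0 := by positivity
  have c : 2 * (p 1)^2 ≠ 0 := by positivity
  have d : (p 1)^3 ≠ 0 := by positivity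
  unfold F1
  fun_prop (disch := assumption)

theorem diff_F2 (p : Pt 3) (h1 : 0 < p 1) (h2 : 0 < p 2) : DifferentiableAt ℝ F2 p := by
  have a : p 1 * p 2 ≠ 0 := by positivity
  have b : p 2 ≠ 0 := by positivity
  have c : 2 * (p 1)^2 ≠ 0 := by positivity
  unfold F2
  fun_prop (disch := assumption)

theorem pd0_F (p : Pt 3) (h1 : 0 < p 1) (h2 : 0 < p 2) : pd 0 exF18 p = F0 p := by
  apply pd_upd _ _ _ _ (diff_F p h1 h2)
  simp only [exF18, Function.update_self, Function.update_of_ne, ne_eq, Fin.reduceEq,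
    not_false_eq_true]
  have h := (((((((hasDerivAt_id (p 0)).const_mul 4).mul_const (p 1)).sub_const ((p 2)^2)).mul_const
    (Real.log (p 1 * p 2))).add_const ((p 2)^2)).div_const (2 * (p 1)^2))
  refine HasDerivAt.congr_deriv h ?_
  try simp only [id_eq, Pi.mul_apply, Pi.pow_apply, Pi.sub_apply, Pi.add_apply]
  unfold F0
  try field_simp
  try ring

theorem hlog1 (v x : ℝ) (h1 : 0 < v) (h2 : 0 < x) :
    HasDerivAt (fun t => Real.log (t * x)) (1 / v) v := by
  have h := ((hasDerivAt_id v).mul_const x).log (by simp; constructor <;> positivity)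
  refine HasDerivAt.congr_deriv h ?_
  try simp only [id_eq, Pi.mul_apply, Pi.pow_apply, Pi.sub_apply, Pi.add_apply]
  try simp
  try field_simp

theorem hlog2 (v x : ℝ) (h1 : 0 < v) (h2 : 0 < x) :
    HasDerivAt (fun t => Real.log (v * t)) (1 / x) x := by
  have h := ((hasDerivAt_id x).const_mul v).log (by simp; constructor <;> positivity)
  refine HasDerivAt.congr_deriv h ?_
  try simp only [id_eq, Pi.mul_apply, Pi.pow_apply, Pi.sub_apply, Pi.add_apply]
  try simp
  try field_simp

theorem pd1_F (p : Pt 3) (h1 : 0 < p 1) (h2 : 0 < p 2) : pd 1 exF18 p = F1 p := by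
  apply pd_upd _ _ _ _ (diff_F p h1 h2)
  simp only [exF18, Function.update_self, Function.update_of_ne, ne_eq, Fin.reduceEq,
    not_false_eq_true]
  have h := ((((((hasDerivAt_id (p 1)).const_mul (4 * p 0)).sub_const ((p 2)^2)).mul
    (hlog1 _ _ h1 h2)).add_const ((p 2)^2)).div (((hasDerivAt_id (p 1)).pow 2).const_mul 2)
    (by simp; positivity))
  refine HasDerivAt.congr_deriv h ?_
  try simp only [id_eq, Pi.mul_apply, Pi.pow_apply, Pi.sub_apply, Pi.add_apply]
  simp [F1]
  try field_simp
  try ring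

theorem pd2_F (p : Pt 3) (h1 : 0 < p 1) (h2 : 0 < p 2) : pd 2 exF18 p = F2 p := by
  apply pd_upd _ _ _ _ (diff_F p h1 h2)
  simp only [exF18, Function.update_self, Function.update_of_ne, ne_eq, Fin.reduceEq,
    not_false_eq_true]
  have h := ((((((hasDerivAt_id (p 2)).pow 2).const_sub (4 * p 0 * p 1)).mul
    (hlog2 _ _ h1 h2)).add ((hasDerivAt_id (p 2)).pow 2)).div_const (2 * (p 1)^2))
  refine HasDerivAt.congr_deriv h ?_
  try simp only [id_eq, Pi.mul_apply, Pi.pow_apply, Pi.sub_apply, Pi.add_apply]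
  simp [F2]
  try field_simp
  try ring

/-- Explicit Christoffel table. -/
def chrE (k i j : Fin 3) (p : Pt 3) : ℝ :=
  ![![![0, F0 p / 2, 0],
      ![F0 p / 2, (exF18 p * F0 p + F1 p) / 2, F2 p / 2],
      ![0, F2 p / 2, 0]],
    ![![0, 0, 0], ![0, -(F0 p / 2), 0], ![0, 0, 0]],
    ![![0, 0, 0], ![0, -(F2 p / 2), 0], ![0, 0, 0]]] k i j

theorem chr_eq (k i j : Fin 3) (p : Pt 3) (h1 : 0 < p 1) (h2 : 0 < p 2) :
    chr (brinkM exF18) k i j p = chrE k i j p := by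
  rw [chr_brink, chrT, chrE, pd0_F p h1 h2, pd1_F p h1 h2, pd2_F p h1 h2]

theorem pd_chr (m k i j : Fin 3) (p : Pt 3) (h1 : 0 < p 1) (h2 : 0 < p 2) :
    pd m (fun q => chr (brinkM exF18) k i j q) p = pd m (fun q => chrE k i j q) p := by
  apply pd_congr
  have a : ∀ᶠ q : Pt 3 in nhds p, 0 < q 1 :=
    (continuous_apply (1 : Fin 3)).continuousAt.eventually (lt_mem_nhds h1)
  have b : ∀ᶠ q : Pt 3 in nhds p, 0 < q 2 :=
    (continuous_apply (2 : Fin 3)).continuousAt.eventually (lt_mem_nhds h2)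
  filter_upwards [a, b] with q ha hb using chr_eq k i j q ha hb

theorem pd0_F0 (p : Pt 3) (h1 : 0 < p 1) (h2 : 0 < p 2) :
    pd 0 (fun q => F0 q / 2) p = 0 := by
  have hd := diff_F0 p h1 h2
  apply pd_upd _ _ _ _ (by fun_prop)
  simp only [F0, Function.update_self, Function.update_of_ne, ne_eq, Fin.reduceEq,
    not_false_eq_true]
  exact hasDerivAt_const _ _

theorem pd1_F0 (p : Pt 3) (h1 : 0 < p 1) (h2 : 0 < p 2) :
    pd 1 (fun q => F0 q / 2) p = (1 - Real.log (p 1 * p 2)) / (p 1)^2 := by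
  have hd := diff_F0 p h1 h2
  apply pd_upd _ _ _ _ (by fun_prop)
  simp only [F0, Function.update_self, Function.update_of_ne, ne_eq, Fin.reduceEq,
    not_false_eq_true]
  have h := ((((hlog1 _ _ h1 h2).const_mul 2).div (hasDerivAt_id (p 1)) h1.ne').div_const (2 : ℝ))
  refine HasDerivAt.congr_deriv h ?_
  try simp only [id_eq, Pi.mul_apply, Pi.pow_apply, Pi.sub_apply, Pi.add_apply]
  try simp
  try field_simp

theorem pd2_F0 (p : Pt 3) (h1 : 0 < p 1) (h2 : 0 < p 2) :
    pd 2 (fun q => F0 q / 2) p = 1 / (p 1 * p 2) := by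
  have hd := diff_F0 p h1 h2
  apply pd_upd _ _ _ _ (by fun_prop)
  simp only [F0, Function.update_self, Function.update_of_ne, ne_eq, Fin.reduceEq,
    not_false_eq_true]
  have h := ((((hlog2 _ _ h1 h2).const_mul 2).div_const (p 1)).div_const (2 : ℝ))
  refine HasDerivAt.congr_deriv h ?_
  try simp only [id_eq, Pi.mul_apply, Pi.pow_apply, Pi.sub_apply, Pi.add_apply]
  try field_simp

theorem pd0_F2 (p : Pt 3) (h1 : 0 < p 1) (h2 : 0 < p 2) :
    pd 0 (fun q => F2 q / 2) p = 1 / (p 1 * p 2) := by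
  have hd := diff_F2 p h1 h2
  apply pd_upd _ _ _ _ (by fun_prop)
  simp only [F2, Function.update_self, Function.update_of_ne, ne_eq, Fin.reduceEq,
    not_false_eq_true]
  have h := (((((((hasDerivAt_id (p 0)).const_mul 4).mul_const (p 1)).div_const (p 2)).sub_const
    (2 * p 2 * Real.log (p 1 * p 2))).add_const (p 2)).div_const (2 * (p 1)^2)).div_const 2
  refine HasDerivAt.congr_deriv h ?_
  try simp only [id_eq, Pi.mul_apply, Pi.pow_apply, Pi.sub_apply, Pi.add_apply]
  try field_simp
  try ring

theorem pd2_F2 (p : Pt 3) (h1 : 0 < p 1) (h2 : 0 < p 2) :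
    pd 2 (fun q => F2 q / 2) p =
      -((4 * p 0 * p 1 + 2 * (p 2)^2 * Real.log (p 1 * p 2) + (p 2)^2) /
              (4 * (p 1)^2 * (p 2)^2)) := by
  have hd := diff_F2 p h1 h2
  apply pd_upd _ _ _ _ (by fun_prop)
  simp only [F2, Function.update_self, Function.update_of_ne, ne_eq, Fin.reduceEq,
    not_false_eq_true]
  have h := (((((hasDerivAt_const (p 2) (4 * p 0 * p 1)).div (hasDerivAt_id (p 2)) h2.ne').sub
    (((hasDerivAt_id (p 2)).const_mul 2).mul (hlog2 _ _ h1 h2))).add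
    (hasDerivAt_id (p 2))).div_const (2 * (p 1)^2)).div_const 2
  refine HasDerivAt.congr_deriv h ?_
  try simp only [id_eq, Pi.mul_apply, Pi.pow_apply, Pi.sub_apply, Pi.add_apply]
  try simp
  try field_simp
  try ring

theorem pd0_FF (p : Pt 3) (h1 : 0 < p 1) (h2 : 0 < p 2) :
    pd 0 (fun q => (exF18 q * F0 q + F1 q) / 2) p =
      F0 p ^ 2 / 2 + (1 - Real.log (p 1 * p 2)) / (p 1)^2 := by
  have e1 := diff_F p h1 h2
  have e2 := diff_F0 p h1 h2
  have e3 := diff_F1 p h1 h2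
  apply pd_upd _ _ _ _ (by fun_prop)
  simp only [exF18, F0, F1, Function.update_self, Function.update_of_ne, ne_eq, Fin.reduceEq,
    not_false_eq_true]
  have k := ((hasDerivAt_id (p 0)).const_mul 4)
  have a := (((((k.mul_const (p 1)).sub_const ((p 2)^2)).mul_const
    (Real.log (p 1 * p 2))).add_const ((p 2)^2)))
  have b := (k.mul_const (Real.log (p 1 * p 2))).add
    (((k.mul_const (p 1)).sub_const ((p 2)^2)).div_const (p 1))
  have h := ((((a.div_const (2 * (p 1)^2)).mul_const (2 * Real.log (p 1 * p 2) / p 1))).add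
    ((b.div_const (2 * (p 1)^2)).sub (a.div_const ((p 1)^3)))).div_const 2
  refine HasDerivAt.congr_deriv h ?_
  try simp only [id_eq, Pi.mul_apply, Pi.pow_apply, Pi.sub_apply, Pi.add_apply]
  try field_simp
  try ring

/-- Explicit Ricci tensor. -/
def ricE (p : Pt 3) : Matrix (Fin 3) (Fin 3) ℝ :=
  !![0, 0, 0;
    0, (4 * p 0 * p 1 + 2 * (p 2)^2 * Real.log (p 1 * p 2) + (p 2)^2) /
              (4 * (p 1)^2 * (p 2)^2), 1 / (p 1 * p 2);
    0, 1 / (p 1 * p 2), 0]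

theorem ric_eq (i j : Fin 3) (p : Pt 3) (h1 : 0 < p 1) (h2 : 0 < p 2) :
    RicciT (brinkM exF18) i j p = ricE p i j := by
  unfold RicciT
  simp only [pd_chr _ _ _ _ p h1 h2, chr_eq _ _ _ p h1 h2, Fin.sum_univ_three]
  fin_cases i <;> fin_cases j <;>
    simp [chrE, ricE, pd_const, pd_neg', pd0_F0 p h1 h2, pd1_F0 p h1 h2, pd2_F0 p h1 h2,
      pd0_F2 p h1 h2, pd2_F2 p h1 h2, pd0_FF p h1 h2] <;> ring

theorem pd_h0 (p : Pt 3) : pd 0 (fun q : Pt 3 => q 1 * q 2) p = 0 := by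
  apply pd_upd _ _ _ _ (by fun_prop)
  try simp
  exact hasDerivAt_const _ _

theorem pd_h1 (p : Pt 3) : pd 1 (fun q : Pt 3 => q 1 * q 2) p = p 2 := by
  apply pd_upd _ _ _ _ (by fun_prop)
  simpa using (hasDerivAt_id (p 1)).mul_const (p 2)

theorem pd_h2 (p : Pt 3) : pd 2 (fun q : Pt 3 => q 1 * q 2) p = p 1 := by
  apply pd_upd _ _ _ _ (by fun_prop)
  simpa using (hasDerivAt_id (p 2)).const_mul (p 1)

theorem pd_coord (i j : Fin 3) (p : Pt 3) :
    pd i (fun q : Pt 3 => q j) p = if i = j then 1 else 0 := by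
  unfold pd
  rw [(hasFDerivAt_apply j p).fderiv]
  simp [Pi.single_apply, eq_comm]

/-- Explicit Hessian. -/
def hesE (p : Pt 3) : Matrix (Fin 3) (Fin 3) ℝ :=
  !![0, 0, 0;
    0, (4 * p 0 * p 1 + 2 * (p 2)^2 * Real.log (p 1 * p 2) + (p 2)^2) /
              (4 * p 1 * p 2), 1;
    0, 1, 0]

theorem hess_eq (i j : Fin 3) (p : Pt 3) (h1 : 0 < p 1) (h2 : 0 < p 2) :
    Hess (brinkM exF18) (fun q => q 1 * q 2) i j p = hesE p i j := by
  unfold Hess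
  simp only [chr_eq _ _ _ p h1 h2, Fin.sum_univ_three, pd_h0, pd_h1, pd_h2]
  fin_cases i <;> fin_cases j <;>
    simp [chrE, hesE, pd_h0, pd_h1, pd_h2, pd_const, pd_coord, F0, F2]
  try field_simp
  try ring

theorem lap_eq (p : Pt 3) (h1 : 0 < p 1) (h2 : 0 < p 2) :
    Lap (brinkM exF18) (fun q => q 1 * q 2) p = 0 := by
  unfold Lap
  simp only [hess_eq _ _ p h1 h2, ginv_brink, Fin.sum_univ_three]
  simp [hesE]

/-- On `{v > 0, x > 0}`, for the Brinkmann metric with `F` as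
in `exF18`: (i) the Ricci operator is as displayed and is 3-step nilpotent;
(ii) `h = vx` satisfies the vacuum weighted Einstein field equation with
`Λ = 0`; (iii) `∇h = x∂_u + v∂_x`, `‖∇h‖² = v²` and `∇h` is spacelike.
In particular there are non-isotropic 3-dimensional Brinkmann-wave solutions
which are not pp-waves. -/
theorem brinkmann_not_ppwave_solution :
    ∀ p : Pt 3, 0 < p 1 → 0 < p 2 →
      RicOpM (brinkM exF18) p =
        (Matrix.of fun i j =>
          if j = 1 ∧ i = 0 then
            (4 * p 0 * p 1 + 2 * (p 2)^2 * Real.log (p 1 * p 2) + (p 2)^2) /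
              (4 * (p 1)^2 * (p 2)^2)
          else if j = 1 ∧ i = 2 then 1 / (p 1 * p 2)
          else if j = 2 ∧ i = 0 then 1 / (p 1 * p 2) else 0) ∧
      RicOpM (brinkM exF18) p ^ 2 ≠ 0 ∧
      RicOpM (brinkM exF18) p ^ 3 = 0 ∧
      WEFEat (brinkM exF18) (fun q => q 1 * q 2) 0 p ∧
      gradV (brinkM exF18) (fun q => q 1 * q 2) p =
        (fun i => if i = 0 then p 2 else if i = 2 then p 1 else 0) ∧
      gradNorm2 (brinkM exF18) (fun q => q 1 * q 2) p = (p 1)^2 ∧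
      0 < gradNorm2 (brinkM exF18) (fun q => q 1 * q 2) p := by
  intro p h1 h2
  have hR : RicOpM (brinkM exF18) p =
        (Matrix.of fun i j =>
          if j = 1 ∧ i = 0 then
            (4 * p 0 * p 1 + 2 * (p 2)^2 * Real.log (p 1 * p 2) + (p 2)^2) /
              (4 * (p 1)^2 * (p 2)^2)
          else if j = 1 ∧ i = 2 then 1 / (p 1 * p 2)
          else if j = 2 ∧ i = 0 then 1 / (p 1 * p 2) else 0) := by
    unfold RicOpM
    simp only [ric_eq _ _ p h1 h2, ginv_brink, Fin.sum_univ_three]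
    ext i j
    fin_cases i <;> fin_cases j <;> simp [ricE]
  have hN : gradNorm2 (brinkM exF18) (fun q => q 1 * q 2) p = (p 1)^2 := by
    unfold gradNorm2
    simp only [ginv_brink, Fin.sum_univ_three, pd_h0, pd_h1, pd_h2]
    simp
    try ring
  refine ⟨hR, ?_, ?_, ?_, ?_, hN, ?_⟩
  · rw [hR]
    intro h
    have h' := congrFun (congrFun h 0) 1
    simp [pow_two, Matrix.mul_apply, Fin.sum_univ_three] at h'
    rcases h' with h' | h' <;> linarith
  · rw [hR]
    ext i j
    fin_cases i <;> fin_cases j <;> simp [pow_succ, Matrix.mul_apply, Fin.sum_univ_three]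
  · intro i j
    simp only [ric_eq _ _ p h1 h2, hess_eq _ _ p h1 h2, lap_eq p h1 h2]
    have a := h1.ne'
    have b := h2.ne'
    fin_cases i <;> fin_cases j <;> simp [ricE, hesE] <;> field_simp <;> simp
  · funext i
    unfold gradV
    simp only [ginv_brink, Fin.sum_univ_three, pd_h0, pd_h1, pd_h2]
    fin_cases i <;> simp
  · rw [hN]; positivity
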